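/- Let n and q be integers with n > 2 and q ≥ 2, and let r be the largest prime divisor of n. Then gcd(Φ_n(q), ∏_{k=1}^{n−1}(q^k − 1)) = gcd(Φ_n(q), n); moreover this common value is either 1 (in which case r does not divide Φ_n(q)) or r (in which case r divides Φ_n(q)), and consequently Φ*_n(q) = Φ_n(q)/gcd(Φ_n(q), n). -/

import Mathlib

/-- `Phi n q` is the `n`-th cyclotomic polynomial evaluated at `q`. -/
noncomputable def Phi (n q : ℕ) : ℕ :=
  ((Polynomial.cyclotomic n ℤ).eval (q : ℤ)).toNat

/-- `PhiStar n q` is the largest divisor of `Phi n q` that is coprime to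
`∏_{k=1}^{n-1} (q^k - 1)` (an empty product is `1`). -/
noncomputable def PhiStar (n q : ℕ) : ℕ :=
  sSup {m : ℕ | m ∣ Phi n q ∧ Nat.Coprime m (∏ k ∈ Finset.Ico 1 n, (q ^ k - 1))}

/-!
Fix a prime `p` dividing `Φ_n(x)` and write `n = p ^ a * m` with `p ∤ m`. Then `x` has order
exactly `m` modulo `p`, so `m ∣ p - 1`: no prime divisor of `n` exceeds `p`. Moreover
`p ∣ x ^ k - 1` exactly when `m ∣ k`, which happens for some `0 < k < n` exactly when `m < n`,
that is, when `p ∣ n`.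

If `p ∣ n`, put `y = x ^ (n / p)`. Then `y ≡ 1` modulo `p` and `Φ_n(x)` divides
`1 + y + ⋯ + y ^ (p - 1)`. For odd `p` this sum is `p` modulo `p ^ 2`; for `p = 2` we have
`n = 2 ^ a` with `a ≥ 2`, so that the sum is a square plus one. Either way `p ^ 2 ∤ Φ_n(x)`.

Hence `Φ_n(q)` shares the same primes with `n`, with the product of the `q ^ k - 1` and with the
largest prime divisor of `n`, each of them dividing `Φ_n(q)` only once, and the three gcds agree.
-/

open Polynomial Finset

/-- `a` is squarefree at the primes dividing `b`: no such prime divides `a` more than once. Under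
this condition `gcd a b` depends only on the primes common to `a` and `b`. -/
def SquarefreeAt (a b : ℕ) : Prop :=
  ∀ p : ℕ, p.Prime → p ∣ b → ¬ p ^ 2 ∣ a

section Gcd

variable {a b c : ℕ}

theorem SquarefreeAt.of_prime_dvd (hb : SquarefreeAt a b)
    (h : ∀ p : ℕ, p.Prime → p ∣ a → p ∣ c → p ∣ b) : SquarefreeAt a c :=
  fun p hp hpc hpa => hb p hp (h p hp ((dvd_pow_self p two_ne_zero).trans hpa) hpc) hpa

theorem SquarefreeAt.squarefree_gcd (hb : SquarefreeAt a b) : Squarefree (a.gcd b) := by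
  refine Nat.squarefree_iff_prime_squarefree.2 fun p hp hpp => ?_
  have hpb : p ∣ b := (dvd_mul_right p p).trans (hpp.trans (a.gcd_dvd_right b))
  exact hb p hp hpb (sq p ▸ hpp.trans (a.gcd_dvd_left b))

theorem SquarefreeAt.gcd_eq_gcd (hb : SquarefreeAt a b)
    (h : ∀ p : ℕ, p.Prime → p ∣ a → (p ∣ c ↔ p ∣ b)) : a.gcd c = a.gcd b := by
  have hc : SquarefreeAt a c := hb.of_prime_dvd fun p hp hpa => (h p hp hpa).1
  rw [Nat.Squarefree.ext_iff hc.squarefree_gcd hb.squarefree_gcd]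
  intro p hp
  simpa only [Nat.dvd_gcd_iff] using and_congr_right (h p hp)

theorem SquarefreeAt.coprime_div_gcd (hb : SquarefreeAt a b) : (a / a.gcd b).Coprime b := by
  refine Nat.coprime_of_dvd fun p hp hpa hpb => hb p hp hpb ?_
  have hpg : p ∣ a.gcd b := Nat.dvd_gcd (hpa.trans (Nat.div_dvd_of_dvd (a.gcd_dvd_left b))) hpb
  calc p ^ 2 = p * p := sq p
    _ ∣ a / a.gcd b * a.gcd b := mul_dvd_mul hpa hpg
    _ = a := Nat.div_mul_cancel (a.gcd_dvd_left b)

theorem isGreatest_dvd_and_coprime (ha₀ : a ≠ 0) (h : (a / a.gcd b).Coprime b) :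
    IsGreatest {m : ℕ | m ∣ a ∧ m.Coprime b} (a / a.gcd b) := by
  have hdvd := a.gcd_dvd_left b
  refine ⟨⟨Nat.div_dvd_of_dvd hdvd, h⟩, fun m ⟨hma, hmb⟩ => ?_⟩
  have hpos : 0 < a / a.gcd b := Nat.div_pos_iff.2
    ⟨Nat.gcd_pos_of_pos_left b (Nat.pos_of_ne_zero ha₀), Nat.le_of_dvd (by lia) hdvd⟩
  refine Nat.le_of_dvd hpos ((hmb.coprime_dvd_right (a.gcd_dvd_right b)).dvd_of_dvd_mul_right ?_)
  rwa [Nat.div_mul_cancel hdvd]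

end Gcd

theorem not_sq_dvd_geom_sum_of_odd {R : Type*} [CommRing R] {p : ℕ} (hp : Odd p) {y : R}
    (hpp : ¬ (p : R) ^ 2 ∣ p) (hy : (p : R) ∣ y - 1) :
    ¬ (p : R) ^ 2 ∣ ∑ i ∈ range p, y ^ i := by
  obtain ⟨b, hb⟩ := hy
  obtain rfl : y = 1 + p * b := by rw [← hb, add_sub_cancel]
  have hsub : (p : R) ^ 2 ∣ ∑ i ∈ range p, (1 + p * b) ^ i - p := by
    simpa using odd_sq_dvd_geom_sum₂_sub (a := (1 : R)) (b := b) hp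
  rwa [dvd_iff_dvd_of_dvd_sub hsub]

theorem not_four_dvd_sq_add_one (z : ℤ) : ¬ 4 ∣ z ^ 2 + 1 := by
  have h : ∀ w : ZMod 4, w ^ 2 + 1 ≠ 0 := by decide
  intro hz
  exact h z (by exact_mod_cast (ZMod.intCast_zmod_eq_zero_iff_dvd _ 4).2 hz)

theorem cyclotomic_mul_dvd_geom_sum (R : Type*) [CommRing R] {d m : ℕ} (hd : d ≠ 0) (hm : 1 < m) :
    cyclotomic (d * m) R ∣ ∑ i ∈ range m, (X ^ d) ^ i := by
  have hmem : d ∈ (d * m).properDivisors := by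
    rw [Nat.mem_properDivisors]
    exact ⟨dvd_mul_right d m, lt_mul_of_one_lt_right (Nat.pos_of_ne_zero hd) hm⟩
  obtain ⟨f, hf⟩ := X_pow_sub_one_mul_cyclotomic_dvd_X_pow_sub_one_of_dvd R hmem
  refine ⟨f, (monic_X_pow_sub_C (1 : R) hd).isRegular.left ?_⟩
  calc (X ^ d - C 1) * ∑ i ∈ range m, (X ^ d) ^ i = X ^ (d * m) - 1 := by
        rw [C_1, mul_geom_sum, pow_mul]
    _ = (X ^ d - C 1) * (cyclotomic (d * m) R * f) := by rw [hf, C_1, mul_assoc]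

theorem eval_cyclotomic_dvd_geom_sum {R : Type*} [CommRing R] {n m : ℕ} (hn : n ≠ 0) (hm : 1 < m)
    (hmn : m ∣ n) (x : R) : (cyclotomic n R).eval x ∣ ∑ i ∈ range m, (x ^ (n / m)) ^ i := by
  have hdvd := cyclotomic_mul_dvd_geom_sum R ((Nat.div_ne_zero_iff_of_dvd hmn).2 ⟨hn, by lia⟩) hm
  rw [Nat.div_mul_cancel hmn] at hdvd
  simpa [eval_finsetSum] using eval_dvd (x := x) hdvd

section EvalCyclotomic

variable {n p : ℕ} {x : ℤ}

theorem prime_dvd_eval_cyclotomic_iff (hn : n ≠ 0) (hp : p.Prime) :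
    (p : ℤ) ∣ (cyclotomic n ℤ).eval x ↔ IsPrimitiveRoot (x : ZMod p) (ordCompl[p] n) := by
  have : Fact p.Prime := ⟨hp⟩
  have : NeZero ((ordCompl[p] n : ℕ) : ZMod p) :=
    ⟨(ZMod.natCast_eq_zero_iff _ p).not.2 (Nat.not_dvd_ordCompl hp hn)⟩
  rw [← isRoot_cyclotomic_prime_pow_mul_iff_of_charP (k := n.factorization p) (p := p),
    Nat.ordProj_mul_ordCompl_eq_self, IsRoot, ← map_cyclotomic n (Int.castRingHom (ZMod p)),
    eval_intCast_map, eq_intCast, Int.cast_id, ZMod.intCast_zmod_eq_zero_iff_dvd]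

theorem prime_dvd_pow_sub_one_iff_ordCompl_dvd (hn : n ≠ 0) (hp : p.Prime)
    (h : (p : ℤ) ∣ (cyclotomic n ℤ).eval x) (k : ℕ) :
    (p : ℤ) ∣ x ^ k - 1 ↔ ordCompl[p] n ∣ k := by
  rw [← ((prime_dvd_eval_cyclotomic_iff hn hp).1 h).pow_eq_one_iff_dvd,
    ← ZMod.intCast_zmod_eq_zero_iff_dvd, Int.cast_sub, Int.cast_pow, Int.cast_one, sub_eq_zero]

theorem ordCompl_dvd_sub_one_of_dvd_eval_cyclotomic (hn : n ≠ 0) (hp : p.Prime)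
    (h : (p : ℤ) ∣ (cyclotomic n ℤ).eval x) : ordCompl[p] n ∣ p - 1 := by
  have : Fact p.Prime := ⟨hp⟩
  have hroot := (prime_dvd_eval_cyclotomic_iff hn hp).1 h
  have hx : (x : ZMod p) ≠ 0 := (hroot.isUnit (Nat.ordCompl_pos p hn).ne').ne_zero
  exact hroot.dvd_of_pow_eq_one _ (ZMod.pow_card_sub_one_eq_one hx)

theorem prime_le_of_dvd_of_dvd_eval_cyclotomic {r : ℕ} (hn : n ≠ 0) (hp : p.Prime)
    (h : (p : ℤ) ∣ (cyclotomic n ℤ).eval x) (hr : r.Prime) (hrn : r ∣ n) : r ≤ p := by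
  rw [← Nat.ordProj_mul_ordCompl_eq_self n p, hr.dvd_mul] at hrn
  rcases hrn with hr_proj | hr_compl
  · exact Nat.le_of_dvd hp.pos (hr.dvd_of_dvd_pow hr_proj)
  · have hr_pred := hr_compl.trans (ordCompl_dvd_sub_one_of_dvd_eval_cyclotomic hn hp h)
    exact (Nat.le_of_dvd hp.pred_pos hr_pred).trans p.pred_le

theorem prime_dvd_prod_pow_sub_one_iff (hn : n ≠ 0) (hp : p.Prime)
    (h : (p : ℤ) ∣ (cyclotomic n ℤ).eval x) :
    (p : ℤ) ∣ ∏ k ∈ Ico 1 n, (x ^ k - 1) ↔ p ∣ n := by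
  simp only [(Nat.prime_iff_prime_int.1 hp).dvd_finsetProd_iff,
    prime_dvd_pow_sub_one_iff_ordCompl_dvd hn hp h, mem_Ico]
  constructor
  · rintro ⟨k, ⟨hk_pos, hk_lt⟩, hk⟩
    by_contra hpn
    rw [(Nat.ordCompl_eq_self_iff_zero_or_not_dvd n hp).2 (.inr hpn)] at hk
    exact (Nat.le_of_dvd hk_pos hk).not_gt hk_lt
  · intro hpn
    have hne : ordCompl[p] n ≠ n := by
      simpa [Nat.ordCompl_eq_self_iff_zero_or_not_dvd n hp, hn] using hpn
    exact ⟨_, ⟨Nat.ordCompl_pos p hn, (Nat.ordCompl_le n p).lt_of_ne hne⟩, dvd_rfl⟩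

theorem prime_dvd_pow_div_sub_one (hn : n ≠ 0) (hp : p.Prime) (hpn : p ∣ n)
    (h : (p : ℤ) ∣ (cyclotomic n ℤ).eval x) : (p : ℤ) ∣ x ^ (n / p) - 1 := by
  rw [prime_dvd_pow_sub_one_iff_ordCompl_dvd hn hp h]
  refine (Nat.coprime_ordCompl hp hn).symm.dvd_of_dvd_mul_right ?_
  rw [Nat.div_mul_cancel hpn]
  exact Nat.ordCompl_dvd n p

theorem four_dvd_of_two_dvd_eval_cyclotomic (hn : 2 < n)
    (h : 2 ∣ (cyclotomic n ℤ).eval x) : 4 ∣ n := by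
  have hcompl : ordCompl[2] n = 1 := Nat.dvd_one.1 <|
    ordCompl_dvd_sub_one_of_dvd_eval_cyclotomic (by lia) Nat.prime_two h
  have hpow : n = 2 ^ n.factorization 2 := by
    simpa [hcompl] using (Nat.ordProj_mul_ordCompl_eq_self n 2).symm
  have htwo : 2 ≤ n.factorization 2 := by
    by_contra! hlt
    have := Nat.pow_le_pow_right two_pos (Nat.le_of_lt_succ hlt)
    lia
  rw [hpow]
  exact pow_dvd_pow 2 htwo

theorem prime_sq_not_dvd_eval_cyclotomic (hn : 2 < n) (hp : p.Prime) (hpn : p ∣ n) (x : ℤ) :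
    ¬ (p : ℤ) ^ 2 ∣ (cyclotomic n ℤ).eval x := by
  intro hsq
  have h : (p : ℤ) ∣ (cyclotomic n ℤ).eval x := (dvd_pow_self _ two_ne_zero).trans hsq
  have hsum := hsq.trans (eval_cyclotomic_dvd_geom_sum (by lia) hp.one_lt hpn x)
  rcases hp.eq_two_or_odd' with rfl | hodd
  · obtain ⟨e, rfl⟩ := four_dvd_of_two_dvd_eval_cyclotomic hn h
    refine not_four_dvd_sq_add_one (x ^ e) ?_
    rw [show 4 * e / 2 = e * 2 by lia] at hsum
    simpa [sum_range_succ, pow_mul, add_comm] using hsum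
  · refine not_sq_dvd_geom_sum_of_odd hodd ?_ (prime_dvd_pow_div_sub_one (by lia) hp hpn h) hsum
    have hp_int := Nat.prime_iff_prime_int.1 hp
    exact fun hpp => hp_int.not_isUnit (hp_int.irreducible.squarefree p (sq (p : ℤ) ▸ hpp))

end EvalCyclotomic

theorem natCast_prod_pow_sub_one {q : ℕ} (hq : q ≠ 0) (s : Finset ℕ) :
    ((∏ k ∈ s, (q ^ k - 1) : ℕ) : ℤ) = ∏ k ∈ s, ((q : ℤ) ^ k - 1) := by
  rw [Nat.cast_prod]
  refine prod_congr rfl fun k _ => ?_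
  rw [Nat.cast_pred (Nat.pow_pos (Nat.pos_of_ne_zero hq)), Nat.cast_pow]

section Phi

variable {n q p : ℕ}

theorem natCast_phi (hn : 2 < n) (q : ℕ) : (Phi n q : ℤ) = (cyclotomic n ℤ).eval (q : ℤ) :=
  Int.toNat_of_nonneg (cyclotomic_pos hn _).le

theorem dvd_phi_iff (hn : 2 < n) : p ∣ Phi n q ↔ (p : ℤ) ∣ (cyclotomic n ℤ).eval (q : ℤ) := by
  rw [← Int.natCast_dvd_natCast, natCast_phi hn]

theorem phi_ne_zero (hn : 2 < n) (q : ℕ) : Phi n q ≠ 0 := by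
  rw [← Int.natCast_ne_zero, natCast_phi hn]
  exact (cyclotomic_pos hn _).ne'

theorem squarefreeAt_phi (hn : 2 < n) (q : ℕ) : SquarefreeAt (Phi n q) n := by
  intro p hp hpn
  rw [dvd_phi_iff hn, Nat.cast_pow]
  exact prime_sq_not_dvd_eval_cyclotomic hn hp hpn q

theorem prime_dvd_prod_iff_of_dvd_phi (hn : 2 < n) (hq : q ≠ 0) (hp : p.Prime)
    (h : p ∣ Phi n q) : p ∣ ∏ k ∈ Ico 1 n, (q ^ k - 1) ↔ p ∣ n := by
  rw [← Int.natCast_dvd_natCast, natCast_prod_pow_sub_one hq]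
  exact prime_dvd_prod_pow_sub_one_iff (by lia) hp ((dvd_phi_iff hn).1 h)

theorem prime_dvd_largest_prime_factor_iff_of_dvd_phi {r : ℕ} (hn : 2 < n) (hr : r.Prime)
    (hrn : r ∣ n) (hmax : ∀ p : ℕ, p.Prime → p ∣ n → p ≤ r) (hp : p.Prime) (h : p ∣ Phi n q) :
    p ∣ r ↔ p ∣ n := by
  refine ⟨fun hpr => hpr.trans hrn, fun hpn => dvd_of_eq (le_antisymm (hmax p hp hpn) ?_)⟩
  exact prime_le_of_dvd_of_dvd_eval_cyclotomic (by lia) hp ((dvd_phi_iff hn).1 h) hr hrn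

end Phi

/-- Remark 5: for `n > 2`, `gcd(Φ_n(q), ∏_{k=1}^{n−1}(q^k − 1)) = gcd(Φ_n(q), n)`,
this common value is `1` (and then `r ∤ Φ_n(q)`) or `r` (and then `r ∣ Φ_n(q)`),
where `r` is the largest prime divisor of `n`; consequently
`Φ*_n(q) = Φ_n(q)/gcd(Φ_n(q), n)`. -/
theorem gcd_eq_gcd_and_phiStar (n q r : ℕ) (hn : 2 < n) (hq : 2 ≤ q)
    (hr : r.Prime) (hrn : r ∣ n) (hmax : ∀ p : ℕ, p.Prime → p ∣ n → p ≤ r) :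
    Nat.gcd (Phi n q) (∏ k ∈ Finset.Ico 1 n, (q ^ k - 1)) = Nat.gcd (Phi n q) n ∧
    ((Nat.gcd (Phi n q) n = 1 ∧ ¬ r ∣ Phi n q) ∨
      (Nat.gcd (Phi n q) n = r ∧ r ∣ Phi n q)) ∧
    PhiStar n q = Phi n q / Nat.gcd (Phi n q) n := by
  have hprod := fun p => prime_dvd_prod_iff_of_dvd_phi (p := p) hn (show q ≠ 0 by lia)
  have hlargest := fun p =>
    prime_dvd_largest_prime_factor_iff_of_dvd_phi (q := q) (p := p) hn hr hrn hmax
  have hsq := squarefreeAt_phi hn q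
  have hgcd_prod := hsq.gcd_eq_gcd hprod
  have hgcd_r := hsq.gcd_eq_gcd hlargest
  refine ⟨hgcd_prod, ?_, ?_⟩
  · rw [← hgcd_r]
    by_cases h : r ∣ Phi n q
    · exact .inr ⟨Nat.gcd_eq_right h, h⟩
    · exact .inl ⟨(hr.coprime_iff_not_dvd.2 h).symm, h⟩
  · rw [← hgcd_prod]
    have hsq_prod := hsq.of_prime_dvd fun p hp h => (hprod p hp h).1
    exact (isGreatest_dvd_and_coprime (phi_ne_zero hn q) hsq_prod.coprime_div_gcd).csSup_eq
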